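/- arXiv:2101.06495 — 3 statements merged into one kernel-verified Lean document; each statement's English description precedes it below -/
import Mathlib

section
/- PerOnE regret bound with per-location constants (the bound established by applying the exponentiated-gradient analysis separately in each window and each location): Suppose each V(·,λ(t)) is convex and differentiable on Ω' with |∂V/∂π(i,j)(π,λ(t))| ≤ L for all π ∈ Ω' and all (i,j). Then for any comparators π*[k] ∈ Ω' with π*[k](i,j) = 0 whenever j ∉ N^i, the PerOnE iterates π(t) with stepsize η > 0 satisfy Σ_{t=1}^T V(π(t),λ(t)) − Σ_{k=1}^K Σ_{t∈W_k} V(π*[k],λ(t)) ≤ K·(Σ_{i∈I} log|N^i|)/η + η·T·|I|·L²/2. -/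
/-! The regret is linearised by the gradient inequality and splits over windows and locations, so
it suffices to bound the linear regret `∑ ⟨g, w - u⟩` of one exponentiated-gradient run against one
comparator `u` on the simplex. The potential is the cross-entropy `crossEntropy u w`, which equals
`log |N|` at the uniform start and is never negative. One update changes it by exactly
`η ⟨g, u⟩ + log Z` (`Z` the normaliser), and Hoeffding's lemma (`expWeights_normalizer_le`) gives
`log Z ≤ -η ⟨g, w⟩ + η² L² / 2`. Thus `crossEntropy_update` charges each slot's linear regret to a
decrease of the potential up to `η² L² / 2`, and the bound follows by telescoping along each window
with `window_induction`. -/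

open Finset Real Classical

/-- `w` is a probability vector whose support is exactly `S`. -/
def IsDistOn {J : Type*} [Fintype J] (S : Finset J) (w : J → ℝ) : Prop :=
  (∀ j ∈ S, 0 < w j) ∧ (∀ j, j ∉ S → w j = 0) ∧ ∑ j, w j = 1

/-- The exponentiated-gradient update of `w` along the gradient `g` with stepsize `η`. -/
noncomputable def egUpdate {J : Type*} [Fintype J] (η : ℝ) (g w : J → ℝ) (j : J) : ℝ :=
  w j * Real.exp (-η * g j) / ∑ l, w l * Real.exp (-η * g l)

/-- The cross-entropy `-∑ u log w`. Outside the support of `w` the junk value `log 0 = 0` occurs, so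
it is meaningful only for `u` supported inside the support of `w`. -/
noncomputable def crossEntropy {J : Type*} [Fintype J] (u w : J → ℝ) : ℝ :=
  -∑ j, u j * Real.log (w j)

lemma IsDistOn.nonneg {J : Type*} [Fintype J] {S : Finset J} {w : J → ℝ} (h : IsDistOn S w)
    (j : J) : 0 ≤ w j := by
  by_cases hj : j ∈ S
  · exact (h.1 j hj).le
  · exact (h.2.1 j hj).ge

lemma IsDistOn.le_one {J : Type*} [Fintype J] {S : Finset J} {w : J → ℝ} (h : IsDistOn S w)
    (j : J) : w j ≤ 1 :=
  h.2.2 ▸ Finset.single_le_sum (fun i _ => h.nonneg i) (Finset.mem_univ j)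

lemma isDistOn_uniform {J : Type*} [Fintype J] {S : Finset J} (hS : S.Nonempty) {w : J → ℝ}
    (hw : ∀ j, w j = if j ∈ S then (1 : ℝ) / (S.card : ℝ) else 0) : IsDistOn S w := by
  have hc : (0 : ℝ) < S.card := by exact_mod_cast hS.card_pos
  refine ⟨fun j hj => ?_, fun j hj => ?_, ?_⟩
  · rw [hw, if_pos hj]; positivity
  · rw [hw, if_neg hj]
  · simp [hw, Finset.sum_ite_mem, hc.ne']

lemma IsDistOn.normalizer_pos {J : Type*} [Fintype J] {S : Finset J} {w : J → ℝ}
    (h : IsDistOn S w) (η : ℝ) (g : J → ℝ) : 0 < ∑ j, w j * Real.exp (-η * g j) := by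
  obtain ⟨j, hj⟩ : ∃ j, w j ≠ 0 := by
    by_contra! hne
    simpa [hne] using h.2.2
  exact Finset.sum_pos' (fun i _ => mul_nonneg (h.nonneg i) (Real.exp_pos _).le)
    ⟨j, Finset.mem_univ j, mul_pos (lt_of_le_of_ne (h.nonneg j) hj.symm) (Real.exp_pos _)⟩

lemma IsDistOn.update {J : Type*} [Fintype J] {S : Finset J} {w : J → ℝ} (h : IsDistOn S w)
    (η : ℝ) (g : J → ℝ) : IsDistOn S (egUpdate η g w) := by
  have hZ := h.normalizer_pos η g
  refine ⟨fun j hj => div_pos (mul_pos (h.1 j hj) (Real.exp_pos _)) hZ, fun j hj => ?_, ?_⟩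
  · simp [egUpdate, h.2.1 j hj]
  · simp only [egUpdate]
    rw [← Finset.sum_div, div_self hZ.ne']

open MeasureTheory ProbabilityTheory in
/-- Hoeffding's lemma for the random variable `g` under the probability vector `w`. -/
lemma expWeights_normalizer_le {J : Type*} [Fintype J] {w g : J → ℝ} (hw : ∀ j, 0 ≤ w j)
    (hw1 : ∑ j, w j = 1) {L : ℝ} (hg : ∀ j, |g j| ≤ L) (η : ℝ) :
    ∑ j, w j * Real.exp (-η * g j) ≤
      Real.exp (-η * ∑ j, w j * g j + η ^ 2 * L ^ 2 / 2) := by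
  let _ : MeasurableSpace J := ⊤
  have : MeasurableSingletonClass J := ⟨fun _ => trivial⟩
  let p : PMF J := PMF.ofFintype (fun j => ENNReal.ofReal (w j)) (by
    rw [← ENNReal.ofReal_sum_of_nonneg (fun j _ => hw j), hw1, ENNReal.ofReal_one])
  have hint : ∀ f : J → ℝ, ∫ j, f j ∂p.toMeasure = ∑ j, w j * f j := fun f => by
    rw [PMF.integral_eq_sum]
    exact Finset.sum_congr rfl fun j _ => by simp [p, ENNReal.toReal_ofReal (hw j)]
  have hsub := hasSubgaussianMGF_of_mem_Icc (μ := p.toMeasure) (X := g) (a := -L) (b := L)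
    (measurable_from_top).aemeasurable (Filter.Eventually.of_forall fun j => abs_le.1 (hg j))
  have hm := hsub.mgf_le (-η)
  rw [mgf, hint, hint] at hm
  have hc : (((‖L - -L‖₊ / 2) ^ 2 : NNReal) : ℝ) = L ^ 2 := by
    have : L - -L = 2 * L := by ring
    simp [this]
  rw [hc] at hm
  set m := ∑ j, w j * g j
  calc ∑ j, w j * Real.exp (-η * g j)
      = Real.exp (-η * m) * ∑ j, w j * Real.exp (-η * (g j - m)) := by
        rw [Finset.mul_sum]
        refine Finset.sum_congr rfl fun j _ => ?_
        rw [mul_left_comm, ← Real.exp_add]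
        ring_nf
    _ ≤ Real.exp (-η * m) * Real.exp (L ^ 2 * (-η) ^ 2 / 2) := by gcongr
    _ = _ := by rw [← Real.exp_add]; ring_nf

lemma crossEntropy_nonneg {J : Type*} [Fintype J] {S : Finset J} {w u : J → ℝ}
    (h : IsDistOn S w) (hu : ∀ j, 0 ≤ u j) : 0 ≤ crossEntropy u w :=
  neg_nonneg.2 <| Finset.sum_nonpos fun j _ =>
    mul_nonpos_of_nonneg_of_nonpos (hu j) (Real.log_nonpos (h.nonneg j) (h.le_one j))

lemma crossEntropy_uniform {J : Type*} [Fintype J] {S : Finset J} {w u : J → ℝ}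
    (hw : ∀ j, w j = if j ∈ S then (1 : ℝ) / (S.card : ℝ) else 0)
    (hu1 : ∑ j, u j = 1) (huS : ∀ j, j ∉ S → u j = 0) :
    crossEntropy u w = Real.log S.card := by
  have : ∀ j, u j * Real.log (w j) = u j * -Real.log S.card := fun j => by
    by_cases hj : j ∈ S
    · simp [hw, hj]
    · simp [huS j hj]
  simp only [crossEntropy, this, ← Finset.sum_mul, hu1]
  ring

/-- One update pays for the linear regret of the slot by a decrease of the cross-entropy, up to
`η² L² / 2`. -/
lemma crossEntropy_update {J : Type*} [Fintype J] {S : Finset J} {w u g : J → ℝ}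
    (h : IsDistOn S w) (hu1 : ∑ j, u j = 1) (huS : ∀ j, j ∉ S → u j = 0)
    {L : ℝ} (hg : ∀ j, |g j| ≤ L) (η : ℝ) :
    η * ∑ j, g j * (w j - u j) + crossEntropy u (egUpdate η g w) ≤
      crossEntropy u w + η ^ 2 * L ^ 2 / 2 := by
  have hZ := h.normalizer_pos η g
  have hlog := Real.log_le_log hZ (expWeights_normalizer_le h.nonneg h.2.2 hg η)
  rw [Real.log_exp] at hlog
  set Z := ∑ j, w j * Real.exp (-η * g j) with hZdef
  have hterm : ∀ j, u j * Real.log (egUpdate η g w j) =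
      u j * Real.log (w j) - η * (g j * u j) - u j * Real.log Z := fun j => by
    by_cases hj : j ∈ S
    · have hwj := h.1 j hj
      rw [egUpdate, ← hZdef, Real.log_div (mul_pos hwj (Real.exp_pos _)).ne' hZ.ne',
        Real.log_mul hwj.ne' (Real.exp_pos _).ne', Real.log_exp]
      ring
    · simp [huS j hj]
  have hnew : crossEntropy u (egUpdate η g w) =
      crossEntropy u w + η * ∑ j, g j * u j + Real.log Z := by
    simp only [crossEntropy, hterm, Finset.sum_sub_distrib, ← Finset.sum_mul, hu1,
      ← Finset.mul_sum]
    ring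
  have hgap : ∑ j, g j * (w j - u j) = ∑ j, w j * g j - ∑ j, g j * u j := by
    rw [← Finset.sum_sub_distrib]
    exact Finset.sum_congr rfl fun j _ => by ring
  rw [hnew, hgap]
  linarith

/-- Induction along a finite window: from its first slot, and from each slot to the next one of the
window. The slots preceding the next one are the current slot and its predecessors. -/
lemma window_induction {T : ℕ} (W : Finset (Fin T)) (P : Fin T → Prop)
    (first : ∀ t ∈ W, (∀ s ∈ W, t ≤ s) → P t)
    (next : ∀ s ∈ W, ∀ t ∈ W, s < t → (∀ u ∈ W, s < u → t ≤ u) →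
      W.filter (· < t) = insert s (W.filter (· < s)) → P s → P t) :
    ∀ t ∈ W, P t := by
  intro t
  induction t using WellFoundedLT.induction with
  | _ t ih =>
    intro ht
    by_cases hne : (W.filter (· < t)).Nonempty
    · have hs := Finset.max'_mem _ hne
      have hmax := fun u hu => Finset.le_max' (W.filter (· < t)) u hu
      set s := (W.filter (· < t)).max' hne
      rw [Finset.mem_filter] at hs
      refine next s hs.1 t ht hs.2 (fun u hu hsu => ?_) ?_ (ih s hs.2 hs.1)
      · by_contra! hut
        exact absurd (hmax u (Finset.mem_filter.2 ⟨hu, hut⟩)) (not_le.2 hsu)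
      · ext u
        simp only [Finset.mem_filter, Finset.mem_insert]
        constructor
        · rintro ⟨hu, hut⟩
          rcases (hmax u (Finset.mem_filter.2 ⟨hu, hut⟩)).eq_or_lt with h | h
          · exact Or.inl h
          · exact Or.inr ⟨hu, h⟩
        · rintro (rfl | ⟨hu, h⟩)
          · exact hs
          · exact ⟨hu, h.trans hs.2⟩
    · refine first t ht fun s hs => ?_
      by_contra! hst
      exact hne ⟨s, Finset.mem_filter.2 ⟨hs, hst⟩⟩

/-- Linear regret of one exponentiated-gradient run along a window, at a single location. -/
lemma window_linear_regret {J : Type*} [Fintype J] {S : Finset J} (hS : S.Nonempty) {T : ℕ}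
    (W : Finset (Fin T)) (x g : Fin T → J → ℝ) {η L : ℝ}
    (hg : ∀ t ∈ W, ∀ j, |g t j| ≤ L)
    (hx : ∀ t ∈ W, IsDistOn S (x t))
    (hinit : ∀ t ∈ W, (∀ s ∈ W, t ≤ s) →
      ∀ j, x t j = if j ∈ S then (1 : ℝ) / (S.card : ℝ) else 0)
    (hstep : ∀ s ∈ W, ∀ t ∈ W, s < t → (∀ u ∈ W, s < u → t ≤ u) → x t = egUpdate η (g s) (x s))
    {u : J → ℝ} (hu : ∀ j, 0 ≤ u j) (hu1 : ∑ j, u j = 1) (huS : ∀ j, j ∉ S → u j = 0) :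
    η * ∑ t ∈ W, ∑ j, g t j * (x t j - u j) ≤ Real.log S.card + W.card * (η ^ 2 * L ^ 2 / 2) := by
  have key : ∀ t ∈ W, η * (∑ s ∈ W.filter (· < t), ∑ j, g s j * (x s j - u j)) +
      crossEntropy u (x t) ≤
        Real.log S.card + (W.filter (· < t)).card * (η ^ 2 * L ^ 2 / 2) := by
    apply window_induction W
    · intro t ht hmin
      have hempty : W.filter (· < t) = ∅ :=
        Finset.filter_eq_empty_iff.2 fun s hs => not_lt.2 (hmin s hs)
      rw [hempty, crossEntropy_uniform (hinit t ht hmin) hu1 huS]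
      simp
    · intro s hs t ht hst hnext hins ih
      have hns : s ∉ W.filter (· < s) := by simp
      have hupd := crossEntropy_update (hx s hs) hu1 huS (hg s hs) η
      rw [hins, Finset.sum_insert hns, Finset.card_insert_of_notMem hns,
        hstep s hs t ht hst hnext]
      push_cast
      linarith
  rcases W.eq_empty_or_nonempty with rfl | hne
  · simpa using Real.log_nonneg (by exact_mod_cast hS.card_pos)
  -- One further, virtual update accounts for the last slot of the window.
  · have ht := W.max'_mem hne
    have hmax := W.le_max'
    set t := W.max' hne
    have hins : W = insert t (W.filter (· < t)) := by
      ext s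
      simp only [Finset.mem_insert, Finset.mem_filter]
      constructor
      · intro hs
        rcases (hmax s hs).eq_or_lt with h | h
        · exact Or.inl h
        · exact Or.inr ⟨hs, h⟩
      · rintro (rfl | ⟨hs, -⟩)
        · exact ht
        · exact hs
    have hnt : t ∉ W.filter (· < t) := by simp
    have hupd := crossEntropy_update (hx t ht) hu1 huS (hg t ht) η
    have hpos := crossEntropy_nonneg ((hx t ht).update η (g t)) hu
    have hk := key t ht
    have hsum : ∑ s ∈ W, ∑ j, g s j * (x s j - u j) = ∑ j, g t j * (x t j - u j) +
        ∑ s ∈ W.filter (· < t), ∑ j, g s j * (x s j - u j) := by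
      conv_lhs => rw [hins, Finset.sum_insert hnt]
    have hcard : (W.card : ℝ) = (W.filter (· < t)).card + 1 := by
      conv_lhs => rw [hins, Finset.card_insert_of_notMem hnt]
      push_cast
      rfl
    rw [hsum, hcard]
    linarith

/-- PerOnE regret bound with per-location constants. -/
theorem perone_regret_per_location
    {I J : Type*} [Fintype I] [Fintype J] [Nonempty I] [Nonempty J]
    -- neighbourhoods
    (N : I → Finset J) (hN : ∀ i, (N i).Nonempty)
    -- horizon, windows forming a partition of the time slots
    (T K : ℕ) (hT : 0 < T) (hK : 0 < K)
    (W : Fin K → Finset (Fin T))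
    (hW : ∀ t : Fin T, ∃! k, t ∈ W k)
    -- stepsize and Lipschitz constant
    (η L : ℝ) (hη : 0 < η) (hL : 0 ≤ L)
    -- feasible set Ω' : product of probability simplices
    (Ω' : Set (I → J → ℝ))
    (hΩ' : Ω' = {p | (∀ i j, 0 ≤ p i j) ∧ ∀ i, ∑ j, p i j = 1})
    -- per-slot costs V(·, λ(t)) with gradients G(t, ·)
    (V : Fin T → (I → J → ℝ) → ℝ)
    (G : Fin T → (I → J → ℝ) → I → J → ℝ)
    -- convexity and differentiability on Ω' (first-order gradient inequality)
    (hconv : ∀ t : Fin T, ∀ p ∈ Ω', ∀ q ∈ Ω',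
      V t p + ∑ i, ∑ j, G t p i j * (q i j - p i j) ≤ V t q)
    -- ‖∇V(pol, λ(t))‖_∞ ≤ L on Ω'
    (hgrad : ∀ t : Fin T, ∀ p ∈ Ω', ∀ i j, |G t p i j| ≤ L)
    -- the PerOnE iterates
    (pol : Fin T → I → J → ℝ)
    -- initialization at the first slot of each window: uniform over N^i
    (hinit : ∀ k, ∀ t ∈ W k, (∀ s ∈ W k, t ≤ s) →
      ∀ i j, pol t i j = if j ∈ N i then (1 : ℝ) / ((N i).card : ℝ) else 0)
    -- exponentiated update at every later slot, from the previous slot of the same window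
    (hstep : ∀ k, ∀ s ∈ W k, ∀ t ∈ W k, s < t → (∀ u ∈ W k, s < u → t ≤ u) →
      ∀ i j, pol t i j =
        pol s i j * Real.exp (-η * G s (pol s) i j) /
          ∑ j' : J, pol s i j' * Real.exp (-η * G s (pol s) i j'))
    -- arbitrary per-window comparators in Ω' supported on the neighbourhoods
    (polstar : Fin K → I → J → ℝ)
    (hpolstar : ∀ k, polstar k ∈ Ω' ∧ ∀ i j, j ∉ N i → polstar k i j = 0) :
    -- regret bound with per-location constants
    (∑ t, V t (pol t)) - (∑ k, ∑ t ∈ W k, V t (polstar k)) ≤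
      (K : ℝ) * (∑ i, Real.log ((N i).card : ℝ)) / η +
        η * (T : ℝ) * (Fintype.card I : ℝ) * L ^ 2 / 2 := by
  have hdist : ∀ k, ∀ t ∈ W k, ∀ i, IsDistOn (N i) (pol t i) := by
    intro k
    apply window_induction (W k)
    · exact fun t ht hmin i => isDistOn_uniform (hN i) (hinit k t ht hmin i)
    · intro s hs t ht hst hnext _ ih i
      have : pol t i = egUpdate η (G s (pol s) i) (pol s i) :=
        funext fun j => hstep k s hs t ht hst hnext i j
      rw [this]
      exact (ih i).update η _
  have hmem : ∀ k, ∀ t ∈ W k, pol t ∈ Ω' := fun k t ht => by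
    rw [hΩ']
    exact ⟨fun i j => (hdist k t ht i).nonneg j, fun i => (hdist k t ht i).2.2⟩
  have hpart : ∀ f : Fin T → ℝ, ∑ t, f t = ∑ k, ∑ t ∈ W k, f t := fun f => by
    have hcover : (Finset.univ : Finset (Fin T)) = Finset.univ.biUnion W := by
      ext t
      simpa using (hW t).exists
    rw [hcover, Finset.sum_biUnion]
    intro k _ l _ hkl
    exact Finset.disjoint_left.2 fun t hk hl => hkl ((hW t).unique hk hl)
  have hcardW : ∑ k, ((W k).card : ℝ) = T := by
    simpa using (hpart fun _ => 1).symm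
  have hwin : ∀ k, ∑ t ∈ W k, (V t (pol t) - V t (polstar k)) ≤
      (∑ i, Real.log ((N i).card : ℝ)) / η +
        (W k).card * (η * (Fintype.card I : ℝ) * L ^ 2 / 2) := by
    intro k
    obtain ⟨hstarΩ, hstar0⟩ := hpolstar k
    have hstar := hstarΩ
    rw [hΩ'] at hstar
    have hloc : ∀ i, η * ∑ t ∈ W k, ∑ j, G t (pol t) i j * (pol t i j - polstar k i j) ≤
        Real.log ((N i).card : ℝ) + (W k).card * (η ^ 2 * L ^ 2 / 2) := fun i =>
      window_linear_regret (hN i) (W k) (fun t => pol t i) (fun t => G t (pol t) i)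
        (fun t ht j => hgrad t _ (hmem k t ht) i j) (fun t ht => hdist k t ht i)
        (fun t ht hmin => hinit k t ht hmin i)
        (fun s hs t ht hst hnext => funext fun j => hstep k s hs t ht hst hnext i j)
        (hstar.1 i) (hstar.2 i) (hstar0 i)
    have hlin : ∑ t ∈ W k, (V t (pol t) - V t (polstar k)) ≤
        ∑ i, ∑ t ∈ W k, ∑ j, G t (pol t) i j * (pol t i j - polstar k i j) := by
      rw [Finset.sum_comm]
      refine Finset.sum_le_sum fun t ht => ?_
      have hc := hconv t _ (hmem k t ht) _ hstarΩ
      have hneg : ∑ i, ∑ j, G t (pol t) i j * (pol t i j - polstar k i j) =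
          -∑ i, ∑ j, G t (pol t) i j * (polstar k i j - pol t i j) := by
        simp only [← Finset.sum_neg_distrib]
        exact Finset.sum_congr rfl fun i _ => Finset.sum_congr rfl fun j _ => by ring
      rw [hneg]
      linarith
    refine hlin.trans ?_
    have hsum := Finset.sum_le_sum fun i (_ : i ∈ Finset.univ) => hloc i
    rw [← Finset.mul_sum, Finset.sum_add_distrib, Finset.sum_const, Finset.card_univ,
      nsmul_eq_mul] at hsum
    refine (le_div_iff₀' hη).2 hsum |>.trans (le_of_eq ?_)
    field_simp
  rw [hpart, ← Finset.sum_sub_distrib]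
  calc ∑ k, (∑ t ∈ W k, V t (pol t) - ∑ t ∈ W k, V t (polstar k))
      ≤ ∑ k, ((∑ i, Real.log ((N i).card : ℝ)) / η +
          (W k).card * (η * (Fintype.card I : ℝ) * L ^ 2 / 2)) :=
        Finset.sum_le_sum fun k _ => by
          rw [← Finset.sum_sub_distrib]
          exact hwin k
    _ = _ := by
        rw [Finset.sum_add_distrib, ← Finset.sum_mul, hcardW, Finset.sum_const,
          Finset.card_univ, Fintype.card_fin, nsmul_eq_mul]
        ring
end

section
/- Strong convexity of the modified entropic regularizer over the product of simplices: For all π₁, π₂ ∈ Ω' such that π₁(i,j) > 0 for all (i,j), it holds that h(π₂) ≥ h(π₁) + Σ_{i∈I} Σ_{j∈J} (1 + log π₁(i,j))·(π₂(i,j) − π₁(i,j)) + (1/(2·|I|))·‖π₂ − π₁‖₁², i.e., h is (1/|I|)-strongly convex with respect to the total 1-norm on Ω'. -/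
open Finset Real

/-!
Each row contributes a Bregman divergence of the negative entropy, that is, a Kullback–Leibler
divergence, so the claim is Pinsker's inequality in every row, followed by the Cauchy–Schwarz bound
`(∑ i, a i) ^ 2 ≤ |I| * ∑ i, a i ^ 2` over the rows.

Pinsker's inequality comes from the pointwise bound
`q log q - q log p - (q - p) ≥ (3 / 2) (q - p) ^ 2 / (q + 2 p)` (`entropy_term_bound`): summing it
and applying Cauchy–Schwarz in the form of Sedrakyan's lemma gives the constant `1 / 2`,
because `∑ j, (q j + 2 p j) = 3`. The pointwise bound is a rational lower bound for `log`
(`rational_le_log`) that agrees with `log`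
to third order at `1`.
-/

/-- The difference of the two sides has derivative `(x - 1) ^ 3 / (x ^ 2 * (x + 2) ^ 2)`, hence
attains its minimum `0` over the positive reals at `x = 1`. -/
lemma rational_le_log {x : ℝ} (hx : 0 < x) :
    (x - 1) * (5 * x + 1) / (2 * x * (x + 2)) ≤ Real.log x := by
  set g : ℝ → ℝ := fun y => Real.log y - (y - 1) * (5 * y + 1) / (2 * y * (y + 2)) with hg
  have hd : ∀ y : ℝ, 0 < y → HasDerivAt g ((y - 1) ^ 3 / (y ^ 2 * (y + 2) ^ 2)) y := by
    intro y hy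
    have hnum : HasDerivAt (fun y : ℝ => (y - 1) * (5 * y + 1))
        (1 * (5 * y + 1) + (y - 1) * (5 * 1)) y :=
      ((hasDerivAt_id' y).sub_const 1).mul (((hasDerivAt_id' y).const_mul 5).add_const 1)
    have hden : HasDerivAt (fun y : ℝ => 2 * y * (y + 2)) (2 * 1 * (y + 2) + 2 * y * 1) y :=
      ((hasDerivAt_id' y).const_mul 2).mul ((hasDerivAt_id' y).add_const 2)
    have hne : 2 * y * (y + 2) ≠ 0 := by positivity
    refine ((Real.hasDerivAt_log hy.ne').sub (hnum.div hden hne)).congr_deriv ?_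
    field_simp
    ring
  have h1 : g 1 = 0 := by simp [hg]
  suffices h : g 1 ≤ g x by
    rw [h1] at h
    exact sub_nonneg.mp h
  rcases le_total x 1 with hx1 | hx1
  · have hanti : AntitoneOn g (Set.Icc x 1) := by
      apply antitoneOn_of_deriv_nonpos (convex_Icc x 1)
      · exact fun y hy => (hd y (hx.trans_le hy.1)).continuousAt.continuousWithinAt
      · rw [interior_Icc]
        exact fun y hy => (hd y (hx.trans hy.1)).differentiableAt.differentiableWithinAt
      · rw [interior_Icc]
        intro y hy
        rw [(hd y (hx.trans hy.1)).deriv]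
        have hcube : (y - 1) ^ 3 ≤ 0 := Odd.pow_nonpos (by decide) (by linarith [hy.2])
        exact div_nonpos_of_nonpos_of_nonneg hcube (by positivity)
    exact hanti ⟨le_rfl, hx1⟩ ⟨hx1, le_rfl⟩ hx1
  · have hmono : MonotoneOn g (Set.Icc 1 x) := by
      apply monotoneOn_of_deriv_nonneg (convex_Icc 1 x)
      · exact fun y hy => (hd y (one_pos.trans_le hy.1)).continuousAt.continuousWithinAt
      · rw [interior_Icc]
        exact fun y hy => (hd y (one_pos.trans hy.1)).differentiableAt.differentiableWithinAt
      · rw [interior_Icc]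
        intro y hy
        rw [(hd y (one_pos.trans hy.1)).deriv]
        have hcube : 0 ≤ (y - 1) ^ 3 := pow_nonneg (by linarith [hy.1]) 3
        positivity
    exact hmono ⟨le_rfl, hx1⟩ ⟨hx1, le_rfl⟩ hx1

/-- A quadratic lower bound for the Bregman divergence of `t ↦ t * log t`; the weight `q + 2 * p`
is what makes the sharp constant in Pinsker's inequality come out. -/
lemma entropy_term_bound {p q : ℝ} (hp : 0 < p) (hq : 0 ≤ q) :
    p * Real.log p + (1 + Real.log p) * (q - p) + 3 / 2 * ((q - p) ^ 2 / (q + 2 * p))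
      ≤ q * Real.log q := by
  rcases hq.eq_or_lt with rfl | hq
  · have h : (0 - p) ^ 2 / (0 + 2 * p) = p / 2 := by
      field_simp
      ring
    rw [h]
    linarith
  · have h := mul_le_mul_of_nonneg_left (rational_le_log (div_pos hq hp)) hq.le
    rw [Real.log_div hq.ne' hp.ne'] at h
    have e : q * ((q / p - 1) * (5 * (q / p) + 1) / (2 * (q / p) * (q / p + 2)))
        = (q - p) + 3 / 2 * ((q - p) ^ 2 / (q + 2 * p)) := by
      field_simp
      ring
    rw [e] at h
    linarith

/-- Pinsker's inequality on the finite simplex, in Bregman-divergence form. -/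
lemma entropy_row_bound {J : Type*} [Fintype J] (p q : J → ℝ)
    (hp : ∀ j, 0 < p j) (hq : ∀ j, 0 ≤ q j) (hp1 : ∑ j, p j = 1) (hq1 : ∑ j, q j = 1) :
    ∑ j, p j * Real.log (p j) + ∑ j, (1 + Real.log (p j)) * (q j - p j)
      + 1 / 2 * (∑ j, |q j - p j|) ^ 2 ≤ ∑ j, q j * Real.log (q j) := by
  have hsum := Finset.sum_le_sum fun j (_ : j ∈ Finset.univ) => entropy_term_bound (hp j) (hq j)
  rw [Finset.sum_add_distrib, Finset.sum_add_distrib, ← Finset.mul_sum] at hsum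
  have hcs := Finset.sq_sum_div_le_sum_sq_div Finset.univ (fun j => |q j - p j|)
    (g := fun j => q j + 2 * p j) fun j _ => by linarith [hp j, hq j]
  simp only [sq_abs] at hcs
  rw [Finset.sum_add_distrib, ← Finset.mul_sum, hp1, hq1] at hcs
  linarith

/-- Strong convexity of the modified entropic regularizer over the product of simplices:
`h` is (1/|I|)-strongly convex w.r.t. the total 1-norm on Ω'. -/
theorem modified_entropy_strongly_convex_product
    {I J : Type*} [Fintype I] [Fintype J] [Nonempty I] [Nonempty J]
    (pol₁ pol₂ : I → J → ℝ)
    (h₁ : (∀ i j, 0 ≤ pol₁ i j) ∧ ∀ i, ∑ j, pol₁ i j = 1)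
    (h₂ : (∀ i j, 0 ≤ pol₂ i j) ∧ ∀ i, ∑ j, pol₂ i j = 1)
    (hpos : ∀ i j, 0 < pol₁ i j) :
    (∑ i, ∑ j, pol₁ i j * Real.log (pol₁ i j))
      + (∑ i, ∑ j, (1 + Real.log (pol₁ i j)) * (pol₂ i j - pol₁ i j))
      + (1 / (2 * (Fintype.card I : ℝ))) * (∑ i, ∑ j, |pol₂ i j - pol₁ i j|) ^ 2
      ≤ ∑ i, ∑ j, pol₂ i j * Real.log (pol₂ i j) := by
  have hrows := Finset.sum_le_sum fun i (_ : i ∈ Finset.univ) =>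
    entropy_row_bound (pol₁ i) (pol₂ i) (hpos i) (h₂.1 i) (h₁.2 i) (h₂.2 i)
  rw [Finset.sum_add_distrib, Finset.sum_add_distrib, ← Finset.mul_sum] at hrows
  have hcs := sq_sum_le_card_mul_sum_sq (s := (Finset.univ : Finset I))
    (f := fun i => ∑ j, |pol₂ i j - pol₁ i j|)
  rw [Finset.card_univ] at hcs
  have hcard : (0 : ℝ) < Fintype.card I := by exact_mod_cast Fintype.card_pos
  have hscaled : 1 / (2 * (Fintype.card I : ℝ)) * (∑ i, ∑ j, |pol₂ i j - pol₁ i j|) ^ 2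
      ≤ 1 / 2 * ∑ i, (∑ j, |pol₂ i j - pol₁ i j|) ^ 2 := by
    rw [div_mul_eq_mul_div, one_mul, div_le_iff₀ (by positivity)]
    linarith
  linarith
end

section
/- Lipschitz continuity of the α-fair cost on the load-feasible region: For every α ≥ 0, λ : I → [0,∞), c : J × I → (0,∞) and ρ₀ ∈ (0,1), and for all π, π' ∈ D = { π ∈ Ω' : ρ_j(π) ≤ ρ₀ for all j ∈ J }, it holds that |φ_α(π) − φ_α(π')| ≤ (1−ρ₀)^{−α} · ( max_{j∈J, i∈I} λ(i)/c(j,i) ) · ‖π − π'‖₁. -/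
/-!
The per-AP cost has derivative `(1 - x) ^ (-α)` for every `α` (including `α = 1`), and this is at most
`(1 - ρ₀) ^ (-α)` on `x ≤ ρ₀` because `α ≥ 0`. The mean value inequality on the convex set
`(-∞, ρ₀]` makes the cost Lipschitz there (`alphaCost_lipschitz`). The loads are linear in the policy
with coefficients at most `max λ(i) / c(j,i)`, so summing the per-AP bounds over `j` gives the claim.
-/

open Finset Real

/-- The derivative takes the same form in the logarithmic case `α = 1` and in the power case. -/
lemma alphaCost_hasDerivAt (α x : ℝ) (hx : x < 1) :
    HasDerivAt (fun x : ℝ => if α = 1 then -Real.log (1 - x) else (1 - x) ^ (1 - α) / (α - 1))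
      ((1 - x) ^ (-α)) x := by
  have hpos : 0 < 1 - x := by linarith
  have hlin : HasDerivAt (fun x : ℝ => 1 - x) (-1) x := by
    simpa using (hasDerivAt_id x).const_sub 1
  by_cases h : α = 1
  · subst h
    simp only [if_true]
    refine (hlin.log hpos.ne').neg.congr_deriv ?_
    rw [Real.rpow_neg_one]
    field_simp
  · simp only [h, if_false]
    have h1 : α - 1 ≠ 0 := sub_ne_zero.mpr h
    refine ((hlin.rpow_const (p := 1 - α) (Or.inl hpos.ne')).div_const (α - 1)).congr_deriv ?_
    rw [show 1 - α - 1 = -α by ring]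
    field_simp
    ring

lemma alphaCost_lipschitz (α : ℝ) (hα : 0 ≤ α) (r : ℝ) (hr : r < 1) (x y : ℝ)
    (hx : x ≤ r) (hy : y ≤ r) :
    |(if α = 1 then -Real.log (1 - x) else (1 - x) ^ (1 - α) / (α - 1)) -
      (if α = 1 then -Real.log (1 - y) else (1 - y) ^ (1 - α) / (α - 1))| ≤
      (1 - r) ^ (-α) * |x - y| := by
  refine (convex_Iic r).norm_image_sub_le_of_norm_hasDerivWithin_le
    (f := fun x : ℝ => if α = 1 then -Real.log (1 - x) else (1 - x) ^ (1 - α) / (α - 1))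
    (f' := fun x => (1 - x) ^ (-α))
    (fun z hz => (alphaCost_hasDerivAt α z (lt_of_le_of_lt hz hr)).hasDerivWithinAt)
    (fun z hz => ?_) hy hx
  have hz' : z ≤ r := hz
  rw [Real.norm_of_nonneg (Real.rpow_nonneg (by linarith) _)]
  exact Real.rpow_le_rpow_of_nonpos (by linarith) (by linarith) (by linarith)

/-- Lipschitz continuity of the α-fair cost on the load-feasible region. -/
theorem alpha_fair_cost_lipschitz
    {I J : Type*} [Fintype I] [Fintype J] [Nonempty I] [Nonempty J]
    (α : ℝ) (hα : 0 ≤ α)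
    (lam : I → ℝ) (hlam : ∀ i, 0 ≤ lam i)
    (c : J → I → ℝ) (hc : ∀ j i, 0 < c j i)
    (ρ₀ : ℝ) (hρ₀ : ρ₀ ∈ Set.Ioo (0 : ℝ) 1)
    -- AP loads
    (ρ : J → (I → J → ℝ) → ℝ)
    (hρ : ρ = fun j p => ∑ i, lam i * p i j / c j i)
    -- the α-fair per-AP utility
    (u : ℝ → ℝ)
    (hu : u = fun x => if α = 1 then -Real.log (1 - x) else (1 - x) ^ (1 - α) / (α - 1))
    -- the load-feasible region
    (D : Set (I → J → ℝ))
    (hD : D = {p | ((∀ i j, 0 ≤ p i j) ∧ ∀ i, ∑ j, p i j = 1) ∧ ∀ j, ρ j p ≤ ρ₀})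
    (pol pol' : I → J → ℝ) (hpol : pol ∈ D) (hpol' : pol' ∈ D) :
    |(∑ j, u (ρ j pol)) - ∑ j, u (ρ j pol')| ≤
      (1 - ρ₀) ^ (-α) *
        (Finset.univ.sup' Finset.univ_nonempty (fun q : J × I => lam q.2 / c q.1 q.2)) *
        (∑ i, ∑ j, |pol i j - pol' i j|) := by
  subst hD hu
  have hload : ∀ j, |ρ j pol - ρ j pol'| ≤
      (Finset.univ.sup' Finset.univ_nonempty (fun q : J × I => lam q.2 / c q.1 q.2)) *
        ∑ i, |pol i j - pol' i j| := by
    intro j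
    rw [hρ]
    simp only
    rw [← Finset.sum_sub_distrib, Finset.mul_sum]
    refine (Finset.abs_sum_le_sum_abs _ _).trans (Finset.sum_le_sum fun i _ => ?_)
    rw [show lam i * pol i j / c j i - lam i * pol' i j / c j i
      = lam i / c j i * (pol i j - pol' i j) by ring, abs_mul,
      abs_of_nonneg (div_nonneg (hlam i) (hc j i).le)]
    exact mul_le_mul_of_nonneg_right
      (Finset.le_sup' (fun q : J × I => lam q.2 / c q.1 q.2) (Finset.mem_univ (j, i)))
      (abs_nonneg _)
  have hK : 0 ≤ (1 - ρ₀) ^ (-α) := Real.rpow_nonneg (by linarith [hρ₀.2]) _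
  rw [← Finset.sum_sub_distrib, Finset.sum_comm (f := fun i j => |pol i j - pol' i j|),
    Finset.mul_sum]
  refine (Finset.abs_sum_le_sum_abs _ _).trans (Finset.sum_le_sum fun j _ => ?_)
  rw [mul_assoc]
  exact (alphaCost_lipschitz α hα ρ₀ hρ₀.2 _ _ (hpol.2 j) (hpol'.2 j)).trans
    (mul_le_mul_of_nonneg_left (hload j) hK)
end
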